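/- Suppose α has an adjusted nearest integer expansion with liminf_{i→∞} a_i = 2, and let d_n^± be the quantities associated to γ_*. Let θ_1 := (√13 − 3)/2. If ε_{i−2} a_{i−2} = −2 and σ ∈ {+1, −1} satisfies σ·d_{i−3}^+ ≤ 0, then (3 − ᾱ_{i−3} − σ·d_{i−3}^−)/((11 − √10)/3 − ᾱ_{i−3}) ≥ (3 − θ_1 − θ_1/(1 − θ_1))/((11 − √10)/3 − θ_1). -/

import Mathlib

open Filter Finset

attribute [local instance] Classical.propDecidable

/-- Distance from `x` to the nearest integer, `‖x‖`. -/
noncomputable def nint (x : ℝ) : ℝ := |x - round x|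

/-- The two-sided inhomogeneous approximation constant
`M(α,γ) = liminf_{|n|→∞} |n|·‖nα-γ‖`. -/
noncomputable def Mval (α γ : ℝ) : ℝ :=
  Filter.liminf (fun n : ℤ => (|n| : ℝ) * nint (n * α - γ)) Filter.cofinite

/-- Denominators `q_i` of a semi-regular continued fraction with partial quotients `a`
and signs `e`: `q_0 = 1`, `q_1 = a_1`, `q_i = a_i q_{i-1} + ε_i q_{i-2}`. -/
noncomputable def qs (a e : ℕ → ℤ) : ℕ → ℤ
  | 0 => 1
  | 1 => a 1
  | i + 2 => a (i + 2) * qs a e (i + 1) + e (i + 2) * qs a e i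

/-- Reversed tails `ᾱ_i = q_{i-1}/q_i` (with `ᾱ_0 = 0`). -/
noncomputable def ab (a e : ℕ → ℤ) (i : ℕ) : ℝ :=
  if i = 0 then 0 else (qs a e (i - 1) : ℝ) / (qs a e i : ℝ)

/-- An adjusted nearest integer expansion of `α`: a semi-regular continued fraction
`α = 1/(a_1 + ε_2/(a_2 + ε_3/(a_3 + ⋯)))` with tails `t i = α_i`, satisfying the
conditions (i)-(iv) of an adjusted expansion. -/
structure ANIE (α : ℝ) where
  /-- partial quotients `a_i` (for `i ≥ 1`) -/
  a : ℕ → ℤ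
  /-- signs `ε_i` -/
  e : ℕ → ℤ
  /-- tails: `t i = α_i`, `t 0 = α` -/
  t : ℕ → ℝ
  ha : ∀ i, 1 ≤ i → 2 ≤ a i
  he : ∀ i, e i = 1 ∨ e i = -1
  he1 : e 1 = 1
  ht0 : t 0 = α
  htpos : ∀ i, 0 < t i
  htlt1 : ∀ i, t i < 1
  hrec : ∀ i, t i = 1 / ((a (i + 1) : ℝ) + (e (i + 2) : ℝ) * t (i + 1))
  /-- condition (i): `a_i = 2` implies `ε_i = +1` or `ε_{i+1} = +1` -/
  hcond1 : ∀ i, 1 ≤ i → a i = 2 → e i = 1 ∨ e (i + 1) = 1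
  /-- condition (ii): if `a_i = 2`, `ε_i = -1` then `1/ᾱ_{i-1} - 1/α_i ≥ 1` -/
  hcond2 : ∀ i, 1 ≤ i → a i = 2 → e i = -1 → 1 / ab a e (i - 1) - 1 / t i ≥ 1
  /-- condition (iii): if `a_i = 2`, `ε_{i+1} = -1` then `1/α_i - 1/ᾱ_{i-1} > 1` -/
  hcond3 : ∀ i, 1 ≤ i → a i = 2 → e (i + 1) = -1 → 1 / t i - 1 / ab a e (i - 1) > 1
  /-- condition (iv): no block `2, (-3,)^k, -2` in the sequence `(ε_i a_i)` -/
  hcond4 : ∀ i k, 1 ≤ i →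
    ¬(e i * a i = 2 ∧ (∀ j, j < k → e (i + 1 + j) * a (i + 1 + j) = -3) ∧
        e (i + 1 + k) * a (i + 1 + k) = -2)

namespace ANIE

variable {α : ℝ}

/-- `D n = D_{n-1} = α_0 α_1 ⋯ α_{n-1}` (so `D 0 = 1`, `D 1 = α`). -/
noncomputable def D (E : ANIE α) (n : ℕ) : ℝ := ∏ j ∈ Finset.range n, E.t j

/-- The number of indices `1 ≤ k ≤ i` with `a_k` odd. -/
noncomputable def oddIdx (E : ANIE α) (i : ℕ) : ℕ :=
  ((Finset.Icc 1 i).filter fun k => Odd (E.a k)).card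

/-- `λ_i`: zero if `a_i` is even, `(-1)^j` if `a_i = a_{n_j}` is the `j`-th odd partial
quotient. -/
noncomputable def lam (E : ANIE α) (i : ℕ) : ℤ :=
  if Odd (E.a i) then (-1) ^ E.oddIdx i else 0

/-- `γ_* = Σ_{i≥1} (a_i - 1 + ε_i + λ_i)/2 · D_{i-1}`. -/
noncomputable def gammaStar (E : ANIE α) : ℝ :=
  ∑' k : ℕ,
    (((E.a (k + 1) : ℝ) - 1 + (E.e (k + 1) : ℝ) + (E.lam (k + 1) : ℝ)) / 2) * E.D (k + 1)

/-- `ᾱ_i = q_{i-1}/q_i`. -/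
noncomputable def abar (E : ANIE α) (i : ℕ) : ℝ := ab E.a E.e i

/-- `δ_i = -(-ε_1)(-ε_2)⋯(-ε_{i+1})`. -/
noncomputable def delta (E : ANIE α) (i : ℕ) : ℤ := -∏ j ∈ Finset.Icc 1 (i + 1), (-E.e j)

/-- `d_n^- = (Σ_{i=1}^n t_i δ_{i-1} q_{i-1}) / (δ_{n-1} q_n)` for `γ_*` (`t_i = λ_i`). -/
noncomputable def dminus (E : ANIE α) (n : ℕ) : ℝ :=
  (∑ i ∈ Finset.Icc 1 n, (E.lam i : ℝ) * (E.delta (i - 1) : ℝ) * (qs E.a E.e (i - 1) : ℝ)) /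
    ((E.delta (n - 1) : ℝ) * (qs E.a E.e n : ℝ))

/-- `d_n^+ = (Σ_{i=n+1}^∞ t_i D_{i-1}) / D_{n-1}` for `γ_*` (`t_i = λ_i`). -/
noncomputable def dplus (E : ANIE α) (n : ℕ) : ℝ :=
  (∑' k : ℕ, (E.lam (n + 1 + k) : ℝ) * E.D (n + 1 + k)) / E.D n

/-- `i ∈ S(γ_*)`: `|d_i^-| ≤ 1 - ᾱ_i` and `-(1-ε_{i+1}α_i) ≤ d_i^+ ≤ 1+ε_{i+1}α_i`. -/
def inS (E : ANIE α) (i : ℕ) : Prop :=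
  |E.dminus i| ≤ 1 - E.abar i ∧
    -(1 - (E.e (i + 1) : ℝ) * E.t i) ≤ E.dplus i ∧
      E.dplus i ≤ 1 + (E.e (i + 1) : ℝ) * E.t i

end ANIE

/-!
Put `xₙ = ᾱₙ` and `sₙ = (-1)^(number of odd a₁, …, aₙ) * dₙ⁻`. Then `xₙ₊₁ = 1 / (a + ε xₙ)`, and
`sₙ₊₁` is `xₙ₊₁ (1 + ε sₙ)` for odd `a` and `-ε xₙ₊₁ sₙ` for even `a`, where `a = aₙ₊₁`, `ε = εₙ₊₁`.
For `εa = 3` this map has the fixed point `(θ, θ / (1 - θ))`, `θ = (√13 - 3) / 2`. Below a roof with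
two linear slopes and apex at this fixed point, the map for `εa = 3` sends points to points below
the roof; the maps for even `a` and for odd `a ≥ 5` land far below it. Only `εa = -3` is delicate:
a preceding partial quotient `2` could push the point above the roof, and condition (iii) excludes
this unless the next signed partial quotient is `2`. In that case no bound is claimed at that index,
and none is needed to go on, since the map for even `a` lands below the roof from any point in the
range of `sₙ`. Finally, with `c = (11 - √10) / 3`, the roof lies below the line through its apex on
which `(3 - x - d) / (c - x)` is constant, and this is the claimed inequality.
-/

lemma qs_pos_and_lt_succ {a e : ℕ → ℤ} (ha : ∀ i, 1 ≤ i → 2 ≤ a i) (he : ∀ i, -1 ≤ e i) (n : ℕ) :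
    0 < qs a e n ∧ qs a e n < qs a e (n + 1) := by
  induction n with
  | zero =>
    have := ha 1 le_rfl
    simp only [qs]
    omega
  | succ n ih =>
    obtain ⟨hpos, hlt⟩ := ih
    have ha' := ha (n + 2) (by omega)
    have he' := he (n + 2)
    refine ⟨by omega, ?_⟩
    simp only [qs] at hlt ⊢
    nlinarith

lemma ab_succ_eq_inv {a e : ℕ → ℤ} {n : ℕ} (hq : qs a e n ≠ 0) :
    ab a e (n + 1) = ((a (n + 1) : ℝ) + e (n + 1) * ab a e n)⁻¹ := by
  cases n with
  | zero => simp [ab, qs]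
  | succ n =>
    have hq' : (qs a e (n + 1) : ℝ) ≠ 0 := by exact_mod_cast hq
    simp only [ab, Nat.add_eq_zero_iff, one_ne_zero, and_false, if_false, Nat.add_sub_cancel]
    rw [← inv_div, qs]
    congr 1
    push_cast
    field_simp

namespace ANIE

section Theta

/-- The number `θ₁ = [0; 3, 3, 3, …]`, fixed by `x ↦ 1 / (3 + x)`. -/
noncomputable def theta : ℝ := (√13 - 3) / 2

lemma theta_mul_three_add_theta : theta * (3 + theta) = 1 := by
  have h : √13 ^ 2 = 13 := Real.sq_sqrt (by norm_num)
  rw [theta]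
  linear_combination h / 4

lemma lt_theta : 0.3027 < theta := by
  have : 3.6054 < √13 := Real.lt_sqrt_of_sq_lt (by norm_num)
  rw [theta]
  linarith

lemma theta_lt : theta < 0.3028 := by
  have : √13 < 3.6056 := (Real.sqrt_lt' (by norm_num)).2 (by norm_num)
  rw [theta]
  linarith

lemma theta_div_one_sub_theta : theta / (1 - theta) = (1 + theta) / 3 := by
  rw [div_eq_div_iff (by linarith [theta_lt]) (by norm_num)]
  linear_combination theta_mul_three_add_theta

end Theta

section Envelope

variable {x s : ℝ}

/-- The roof-shaped upper bound for `(-1)^(number of odd a₁, …, aₙ) * dₙ⁻` as a function of `ᾱₙ`.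
Its apex is the fixed point `(θ, θ / (1 - θ))` of `(x, s) ↦ (1 / (3 + x), (1 + s) / (3 + x))`. The
right slope `-1 / 40` is a round number just steeper than that of the line through the apex on which
`(3 - x - d) / (c - x)` is constant, about `-0.0204` for `c = (11 - √10) / 3`. -/
noncomputable def envelope (x : ℝ) : ℝ :=
  theta / (1 - theta) + min (-(x - theta) / 40) (9 / 20 * (x - theta))

lemma le_envelope_iff :
    s ≤ envelope x ↔
      s ≤ (1 + theta) / 3 - (x - theta) / 40 ∧ s ≤ (1 + theta) / 3 + 9 / 20 * (x - theta) := by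
  rw [envelope, theta_div_one_sub_theta, ← min_add_add_left, le_min_iff, neg_div, ← sub_eq_add_neg]

lemma le_apex_line_of_le_envelope {k : ℝ} (hs : s ≤ envelope x) (hk₁ : -(1 / 40) ≤ k)
    (hk₂ : k ≤ 9 / 20) : s ≤ (1 + theta) / 3 + k * (x - theta) := by
  obtain ⟨h₁, h₂⟩ := le_envelope_iff.1 hs
  rcases le_total x theta with h | h
  · linarith [mul_le_mul_of_nonpos_right hk₂ (sub_nonpos.2 h)]
  · linarith [mul_le_mul_of_nonneg_right hk₁ (sub_nonneg.2 h)]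

lemma quarter_le_envelope (hx0 : 0 ≤ x) (hx1 : x ≤ 1) : 1 / 4 ≤ envelope x := by
  rw [le_envelope_iff]
  constructor <;> linarith [lt_theta, theta_lt]

lemma half_mul_le_envelope (hx : x ≤ 2 / 3) : 1 / 2 * x ≤ envelope x := by
  rw [le_envelope_iff]
  constructor <;> linarith [lt_theta, theta_lt]

lemma three_halves_mul_le_envelope (hx : x ≤ 1 / 4) : 3 / 2 * x ≤ envelope x := by
  rw [le_envelope_iff]
  constructor <;> linarith [lt_theta, theta_lt]

lemma inv_mul_le_envelope_of_three (hx : -3 < x) (hs : s ≤ envelope x) :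
    (3 + x)⁻¹ * (1 + s) ≤ envelope (3 + x)⁻¹ := by
  have hl := lt_theta
  have hu := theta_lt
  have hθ := theta_mul_three_add_theta
  have hy : 0 < (3 + x)⁻¹ := inv_pos.2 (by linarith)
  have hyx : (3 + x)⁻¹ * (3 + x) = 1 := inv_mul_cancel₀ (by linarith)
  set y := (3 + x)⁻¹
  have y_sub : y - theta = -(y * (theta * (x - theta))) := by
    linear_combination -y * hθ + theta * hyx
  have s_eq : y * (1 + s) =
      (1 + theta) / 3 + y * (s - (1 + theta) / 3 - (1 + theta) / 3 * (x - theta)) := by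
    linear_combination (1 + theta) / 3 * hyx - y / 3 * hθ
  have right : s ≤ (1 + theta) / 3 + ((1 + theta) / 3 + theta / 40) * (x - theta) :=
    le_apex_line_of_le_envelope hs (by linarith) (by linarith)
  have left : s ≤ (1 + theta) / 3 + ((1 + theta) / 3 - 9 / 20 * theta) * (x - theta) :=
    le_apex_line_of_le_envelope hs (by linarith) (by linarith)
  rw [le_envelope_iff, y_sub, s_eq]
  constructor
  · linarith [mul_le_mul_of_nonneg_left right hy.le]
  · linarith [mul_le_mul_of_nonneg_left left hy.le]

-- `0.441` is just below `(1 + θ) / 3 + θ / 40`, the height at `0` of the line of slope `-1 / 40`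
-- through the apex.
lemma inv_mul_le_envelope_of_neg_three (hx0 : 0 ≤ x) (hx : x ≤ 1 / 2)
    (hs : 0.441 * x - 0.3 ≤ s) : (3 - x)⁻¹ * (1 - s) ≤ envelope (3 - x)⁻¹ := by
  have hl := lt_theta
  have hu := theta_lt
  have hlow : 1 / 3 ≤ (3 - x)⁻¹ := by
    rw [one_div]
    exact inv_anti₀ (by linarith) (by linarith)
  have hupp : (3 - x)⁻¹ ≤ 2 / 5 := by
    rw [← inv_div]
    exact inv_anti₀ (by norm_num) (by linarith)
  have hyx : (3 - x)⁻¹ * (3 - x) = 1 := inv_mul_cancel₀ (by linarith)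
  set y := (3 - x)⁻¹
  have bound : y * (1 - s) ≤ 0.441 - 0.023 * y := by
    calc y * (1 - s) ≤ y * (1.3 - 0.441 * x) :=
          mul_le_mul_of_nonneg_left (by linarith) (by linarith)
      _ = 0.441 - 0.023 * y := by linear_combination 0.441 * hyx
  rw [le_envelope_iff]
  constructor <;> linarith

lemma apex_ratio_le_of_le_envelope {c d : ℝ} (hc₁ : 2.6 ≤ c) (hc₂ : c ≤ 2.614) (hx : x < c)
    (hd : d ≤ envelope x) :
    (3 - theta - theta / (1 - theta)) / (c - theta) ≤ (3 - x - d) / (c - x) := by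
  have hl := lt_theta
  have hu := theta_lt
  rw [theta_div_one_sub_theta]
  set R := (3 - theta - (1 + theta) / 3) / (c - theta) with hR
  have apex : R * (c - theta) = 3 - theta - (1 + theta) / 3 := by
    rw [hR, div_mul_cancel₀ _ (by linarith)]
  have hR₁ : 39 / 40 ≤ R := (le_div_iff₀ (by linarith)).2 (by linarith)
  have hR₂ : R ≤ 1 := (div_le_one (by linarith)).2 (by linarith)
  -- The right-hand side is the `d` for which `(3 - x - d) / (c - x)` equals `R`.
  have below_line : d ≤ (1 + theta) / 3 + (R - 1) * (x - theta) :=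
    le_apex_line_of_le_envelope hd (by linarith) (by linarith)
  rw [le_div_iff₀ (by linarith)]
  linarith

end Envelope

variable {α : ℝ} (E : ANIE α)

section Tails

lemma neg_one_le_e (n : ℕ) : -1 ≤ E.e n := by
  rcases E.he n with h | h <;> simp [h]

lemma qs_pos (n : ℕ) : 0 < qs E.a E.e n :=
  (qs_pos_and_lt_succ E.ha E.neg_one_le_e n).1

lemma abar_zero : E.abar 0 = 0 := by simp [abar, ab]

lemma abar_succ (n : ℕ) :
    E.abar (n + 1) = (E.a (n + 1) + E.e (n + 1) * E.abar n : ℝ)⁻¹ :=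
  ab_succ_eq_inv (E.qs_pos n).ne'

lemma abar_succ_eq_div (n : ℕ) :
    E.abar (n + 1) = (qs E.a E.e n : ℝ) / qs E.a E.e (n + 1) := by
  simp [abar, ab]

lemma abar_succ_pos (n : ℕ) : 0 < E.abar (n + 1) := by
  rw [abar_succ_eq_div]
  exact div_pos (mod_cast E.qs_pos n) (mod_cast E.qs_pos (n + 1))

lemma abar_nonneg (n : ℕ) : 0 ≤ E.abar n := by
  cases n with
  | zero => rw [abar_zero]
  | succ n => exact (E.abar_succ_pos n).le

lemma abar_succ_le_of_e_eq_one {n : ℕ} {m : ℝ} (hm : 0 < m) (ha : m ≤ E.a (n + 1))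
    (he : E.e (n + 1) = 1) : E.abar (n + 1) ≤ m⁻¹ := by
  rw [abar_succ, he]
  refine inv_anti₀ hm ?_
  push_cast
  linarith [E.abar_nonneg n]

lemma abar_le_half_of_e_eq_neg_one {n : ℕ} (he : E.e (n + 1) = -1) : E.abar n ≤ 1 / 2 := by
  induction n with
  | zero => norm_num [abar_zero]
  | succ n ih =>
    have ha : (2 : ℝ) ≤ E.a (n + 1) := mod_cast E.ha (n + 1) (by omega)
    rcases E.he (n + 1) with he' | he'
    · simpa using E.abar_succ_le_of_e_eq_one two_pos ha he'
    · have ha_ne : E.a (n + 1) ≠ 2 := fun h => by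
        rcases E.hcond1 (n + 1) (by omega) h with h' | h' <;> omega
      have ha3 : (3 : ℝ) ≤ E.a (n + 1) := by
        exact_mod_cast (E.ha (n + 1) (by omega)).lt_of_ne' ha_ne
      rw [abar_succ, he', one_div]
      refine inv_anti₀ two_pos ?_
      push_cast
      linarith [ih he']

lemma abar_succ_le {n : ℕ} {m : ℝ} (hm : 1 / 2 < m) (ha : m ≤ E.a (n + 1)) :
    E.abar (n + 1) ≤ (m - 1 / 2)⁻¹ := by
  rcases E.he (n + 1) with he | he
  · exact (E.abar_succ_le_of_e_eq_one (by linarith) ha he).trans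
      (inv_anti₀ (by linarith) (by linarith))
  · rw [abar_succ, he]
    refine inv_anti₀ (by linarith) ?_
    push_cast
    linarith [E.abar_le_half_of_e_eq_neg_one he]

lemma abar_succ_le_two_thirds (n : ℕ) : E.abar (n + 1) ≤ 2 / 3 := by
  have ha : (2 : ℝ) ≤ E.a (n + 1) := mod_cast E.ha (n + 1) (by omega)
  exact (E.abar_succ_le (by norm_num) ha).trans_eq (by norm_num)

lemma abar_le_two_thirds (n : ℕ) : E.abar n ≤ 2 / 3 := by
  cases n with
  | zero => norm_num [abar_zero]
  | succ n => exact E.abar_succ_le_two_thirds n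

lemma abar_succ_le_two_fifths {n : ℕ} (ha : 3 ≤ E.a (n + 1)) : E.abar (n + 1) ≤ 2 / 5 :=
  (E.abar_succ_le (m := 3) (by norm_num) (mod_cast ha)).trans_eq (by norm_num)

lemma t_lt_half {n : ℕ} (ha : 3 ≤ E.a (n + 1)) : E.t n < 1 / 2 := by
  have ha' : (3 : ℝ) ≤ E.a (n + 1) := mod_cast ha
  have ht0 := E.htpos (n + 1)
  have ht1 := E.htlt1 (n + 1)
  rw [E.hrec n]
  refine one_div_lt_one_div_of_lt two_pos ?_
  rcases E.he (n + 2) with he | he <;> rw [he] <;> push_cast <;> linarith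

lemma one_div_t_lt_of_a_eq_three {n : ℕ} (ha : E.a (n + 1) = 3)
    (hnext : E.e (n + 2) * E.a (n + 2) ≠ 2) : 1 / E.t n < 7 / 2 := by
  rw [E.hrec n, one_div_one_div, ha]
  rcases E.he (n + 2) with he | he
  · have hne : E.a (n + 2) ≠ 2 := by simpa [he] using hnext
    have := E.t_lt_half ((E.ha (n + 2) (by omega)).lt_of_ne' hne)
    rw [he]
    push_cast
    linarith
  · rw [he]
    push_cast
    linarith [E.htpos (n + 1)]

lemma two_fifths_lt_abar_of_two_neg_three {n : ℕ} (ha : E.a (n + 2) = 2)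
    (he : E.e (n + 3) = -1) (ha' : E.a (n + 3) = 3) (hnext : E.e (n + 4) * E.a (n + 4) ≠ 2) :
    2 / 5 < E.abar (n + 1) := by
  have hcond : 1 / E.t (n + 2) - 1 / E.abar (n + 1) > 1 := E.hcond3 (n + 2) (by omega) ha he
  have ht : 1 / E.t (n + 2) < 7 / 2 := E.one_div_t_lt_of_a_eq_three ha' hnext
  have : 1 / E.abar (n + 1) < 5 / 2 := by linarith
  rw [div_lt_iff₀ (E.abar_succ_pos n)] at this
  linarith

end Tails

section NormalizedDminus

lemma cast_delta_ne_zero (n : ℕ) : (E.delta n : ℝ) ≠ 0 := by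
  rw [Int.cast_ne_zero, delta, neg_ne_zero, Finset.prod_ne_zero_iff]
  intro i _
  rcases E.he i with h | h <;> simp [h]

lemma delta_succ (n : ℕ) : E.delta (n + 1) = -E.e (n + 2) * E.delta n := by
  rw [delta, delta, Finset.prod_Icc_succ_top (by omega)]
  ring

lemma dminus_zero : E.dminus 0 = 0 := by simp [dminus]

lemma dminus_succ (n : ℕ) :
    E.dminus (n + 1) = E.abar (n + 1) * (E.lam (n + 1) - E.e (n + 1) * E.dminus n) := by
  have hq : ∀ k, (qs E.a E.e k : ℝ) ≠ 0 := fun k => mod_cast (E.qs_pos k).ne'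
  have hδ := E.cast_delta_ne_zero
  rw [abar_succ_eq_div]
  cases n with
  | zero =>
    have := hδ 0
    have := hq 1
    rw [dminus_zero]
    simp only [dminus, zero_add, Finset.Icc_self, Finset.sum_singleton, Nat.sub_self, mul_zero,
      sub_zero]
    field_simp
  | succ n =>
    have := hδ n
    have := hq (n + 1)
    have := hq (n + 2)
    simp only [dminus, Finset.sum_Icc_succ_top (Nat.le_add_left 1 (n + 1)), Nat.add_sub_cancel,
      delta_succ, Int.cast_mul, Int.cast_neg]
    rcases E.he (n + 2) with he | he <;> simp only [he, Int.cast_one, Int.cast_neg] <;>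
      field_simp <;> ring

lemma oddIdx_succ (n : ℕ) :
    E.oddIdx (n + 1) = E.oddIdx n + if Odd (E.a (n + 1)) then 1 else 0 := by
  rw [oddIdx, oddIdx, Finset.card_filter, Finset.card_filter,
    Finset.sum_Icc_succ_top (Nat.le_add_left 1 n)]

/-- The number `sₙ = (-1)^(number of odd a₁, …, aₙ) * dₙ⁻`. With this sign, each odd partial
quotient contributes `+1` to the recurrence. -/
noncomputable def normalizedDminus (n : ℕ) : ℝ := (-1) ^ E.oddIdx n * E.dminus n

lemma abs_normalizedDminus (n : ℕ) : |E.normalizedDminus n| = |E.dminus n| := by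
  simp [normalizedDminus, abs_mul]

lemma normalizedDminus_zero : E.normalizedDminus 0 = 0 := by
  simp [normalizedDminus, dminus_zero]

lemma normalizedDminus_succ_of_odd {n : ℕ} (h : Odd (E.a (n + 1))) :
    E.normalizedDminus (n + 1) =
      E.abar (n + 1) * (1 + E.e (n + 1) * E.normalizedDminus n) := by
  have hsq : ((-1 : ℝ) ^ E.oddIdx n) * (-1) ^ E.oddIdx n = 1 := by
    rw [← mul_pow]
    simp
  simp only [normalizedDminus, dminus_succ, lam, if_pos h, oddIdx_succ, pow_succ]
  push_cast
  linear_combination E.abar (n + 1) * hsq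

lemma normalizedDminus_succ_of_even {n : ℕ} (h : Even (E.a (n + 1))) :
    E.normalizedDminus (n + 1) = -(E.abar (n + 1) * (E.e (n + 1) * E.normalizedDminus n)) := by
  have h' := Int.not_odd_iff_even.2 h
  simp only [normalizedDminus, dminus_succ, lam, if_neg h', oddIdx_succ]
  push_cast
  ring

lemma three_le_a_of_odd {n : ℕ} (h : Odd (E.a (n + 1))) : 3 ≤ E.a (n + 1) := by
  have := E.ha (n + 1) (by omega)
  obtain ⟨k, hk⟩ := h
  omega

lemma normalizedDminus_mem_Icc (n : ℕ) :
    E.normalizedDminus n ∈ Set.Icc (-1 / 4 : ℝ) (1 / 2) := by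
  induction n with
  | zero => norm_num [normalizedDminus_zero]
  | succ n ih =>
    obtain ⟨hs₁, hs₂⟩ := ih
    have hx := E.abar_nonneg (n + 1)
    have ha : (2 : ℝ) ≤ E.a (n + 1) := mod_cast E.ha (n + 1) (by omega)
    rcases Int.even_or_odd (E.a (n + 1)) with hpar | hpar
    · rw [E.normalizedDminus_succ_of_even hpar]
      rcases E.he (n + 1) with he | he <;> rw [he] <;> push_cast
      · have := E.abar_succ_le_of_e_eq_one two_pos ha he
        constructor <;> nlinarith
      · have := E.abar_succ_le_two_thirds n
        constructor <;> nlinarith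
    · have ha3 := E.three_le_a_of_odd hpar
      rw [E.normalizedDminus_succ_of_odd hpar]
      rcases E.he (n + 1) with he | he <;> rw [he] <;> push_cast
      · have := E.abar_succ_le_of_e_eq_one three_pos (mod_cast ha3) he
        constructor <;> nlinarith
      · have := E.abar_succ_le_two_fifths ha3
        constructor <;> nlinarith

lemma abs_e_mul_normalizedDminus_le (m n : ℕ) : |E.e m * E.normalizedDminus n| ≤ 1 / 2 := by
  obtain ⟨h₁, h₂⟩ := E.normalizedDminus_mem_Icc n
  rw [abs_le]
  rcases E.he m with he | he <;> rw [he] <;> push_cast <;> constructor <;> linarith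

lemma abs_normalizedDminus_succ_le_of_even {n : ℕ} (h : Even (E.a (n + 1))) :
    |E.normalizedDminus (n + 1)| ≤ 1 / 2 * E.abar (n + 1) := by
  rw [E.normalizedDminus_succ_of_even h, abs_neg, abs_mul, abs_of_nonneg (E.abar_nonneg _),
    mul_comm]
  exact mul_le_mul_of_nonneg_right (E.abs_e_mul_normalizedDminus_le _ _) (E.abar_nonneg _)

lemma normalizedDminus_succ_nonneg_of_odd {n : ℕ} (h : Odd (E.a (n + 1))) :
    0 ≤ E.normalizedDminus (n + 1) := by
  rw [E.normalizedDminus_succ_of_odd h]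
  have := (abs_le.1 (E.abs_e_mul_normalizedDminus_le (n + 1) n)).1
  exact mul_nonneg (E.abar_nonneg _) (by linarith)

lemma normalizedDminus_succ_le_of_odd {n : ℕ} (h : Odd (E.a (n + 1))) :
    E.normalizedDminus (n + 1) ≤ 3 / 2 * E.abar (n + 1) := by
  rw [E.normalizedDminus_succ_of_odd h, mul_comm]
  have := (abs_le.1 (E.abs_e_mul_normalizedDminus_le (n + 1) n)).2
  exact mul_le_mul_of_nonneg_right (by linarith) (E.abar_nonneg _)

end NormalizedDminus

section Invariant

-- The bound is `0.441 * xₙ₊₁ - 0.3 ≤ sₙ₊₁` rewritten with `sₙ₊₁ = -xₙ₊₁ sₙ`, `xₙ₊₁ = 1 / (2 + xₙ)`.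
lemma normalizedDminus_le_of_two_neg_three {n : ℕ} (ha : E.a (n + 1) = 2)
    (he : E.e (n + 2) = -1) (ha' : E.a (n + 2) = 3) (hnext : E.e (n + 3) * E.a (n + 3) ≠ 2) :
    E.normalizedDminus n ≤ 0.3 * E.abar n + 0.159 := by
  cases n with
  | zero => norm_num [normalizedDminus_zero, abar_zero]
  | succ n =>
    have hx : 2 / 5 < E.abar (n + 1) := E.two_fifths_lt_abar_of_two_neg_three ha he ha' hnext
    have a_eq_two : E.a (n + 1) = 2 := by
      by_contra hne
      exact hx.not_ge (E.abar_succ_le_two_fifths ((E.ha (n + 1) (by omega)).lt_of_ne' hne))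
    have := E.abs_normalizedDminus_succ_le_of_even (n := n) (by rw [a_eq_two]; decide)
    linarith [le_abs_self (E.normalizedDminus (n + 1)), E.abar_succ_le_two_thirds n]

lemma le_normalizedDminus_of_neg_three {n : ℕ} (he : E.e (n + 1) = -1) (ha : E.a (n + 1) = 3)
    (hnext : E.e (n + 2) * E.a (n + 2) ≠ 2) :
    0.441 * E.abar n - 0.3 ≤ E.normalizedDminus n := by
  have hx := E.abar_le_half_of_e_eq_neg_one he
  cases n with
  | zero => norm_num [normalizedDminus_zero, abar_zero]
  | succ n =>
    rcases Int.even_or_odd (E.a (n + 1)) with hpar | hpar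
    · rcases eq_or_ne (E.a (n + 1)) 2 with ha2 | ha2
      · have he' : E.e (n + 1) = 1 :=
          (E.hcond1 (n + 1) (by omega) ha2).resolve_right (by omega)
        have hs := E.normalizedDminus_le_of_two_neg_three ha2 he ha hnext
        have hx_pos := E.abar_succ_pos n
        have hrec : E.abar (n + 1) * (2 + E.abar n) = 1 := by
          rw [abar_succ, ha2, he']
          push_cast
          rw [one_mul, inv_mul_cancel₀ (by linarith [E.abar_nonneg n])]
        rw [E.normalizedDminus_succ_of_even hpar, he', Int.cast_one, one_mul]
        linarith [mul_le_mul_of_nonneg_left hs hx_pos.le]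
      · have ha4 : 4 ≤ E.a (n + 1) := by
          have := E.ha (n + 1) (by omega)
          obtain ⟨k, hk⟩ := hpar
          omega
        have hx' := E.abar_succ_le (m := 4) (by norm_num) (mod_cast ha4)
        have hs := (abs_le.1 (E.abs_normalizedDminus_succ_le_of_even hpar)).1
        norm_num at hx'
        linarith
    · linarith [E.normalizedDminus_succ_nonneg_of_odd hpar]

lemma normalizedDminus_succ_le_envelope_of_three {n : ℕ} (ha : E.a (n + 1) = 3)
    (ih : E.normalizedDminus n ≤ envelope (E.abar n))
    (hnext : E.e (n + 2) * E.a (n + 2) ≠ 2) :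
    E.normalizedDminus (n + 1) ≤ envelope (E.abar (n + 1)) := by
  rw [E.normalizedDminus_succ_of_odd (by rw [ha]; decide), abar_succ, ha]
  have hx := E.abar_nonneg n
  rcases E.he (n + 1) with he | he
  · simpa [he] using inv_mul_le_envelope_of_three (by linarith) ih
  · simpa [he, ← sub_eq_add_neg] using inv_mul_le_envelope_of_neg_three hx
      (E.abar_le_half_of_e_eq_neg_one he) (E.le_normalizedDminus_of_neg_three he ha hnext)

theorem normalizedDminus_le_envelope {n : ℕ} (hnext : E.e (n + 1) * E.a (n + 1) ≠ 2) :
    E.normalizedDminus n ≤ envelope (E.abar n) := by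
  induction n with
  | zero =>
    rw [normalizedDminus_zero, abar_zero]
    linarith [quarter_le_envelope le_rfl zero_le_one]
  | succ n ih =>
    rcases Int.even_or_odd (E.a (n + 1)) with hpar | hpar
    · exact (le_abs_self _).trans ((E.abs_normalizedDminus_succ_le_of_even hpar).trans
        (half_mul_le_envelope (E.abar_succ_le_two_thirds n)))
    · rcases eq_or_ne (E.a (n + 1)) 3 with ha | ha
      · refine E.normalizedDminus_succ_le_envelope_of_three ha (ih ?_) hnext
        rcases E.he (n + 1) with he | he <;> simp [he, ha]
      · have ha5 : 5 ≤ E.a (n + 1) := by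
          have := E.three_le_a_of_odd hpar
          obtain ⟨k, hk⟩ := hpar
          omega
        have hx := E.abar_succ_le (m := 5) (by norm_num) (mod_cast ha5)
        exact (E.normalizedDminus_succ_le_of_odd hpar).trans
          (three_halves_mul_le_envelope (hx.trans (by norm_num)))

theorem abs_dminus_le_envelope {n : ℕ} (hnext : E.e (n + 1) * E.a (n + 1) ≠ 2) :
    |E.dminus n| ≤ envelope (E.abar n) := by
  rw [← abs_normalizedDminus, abs_le']
  refine ⟨E.normalizedDminus_le_envelope hnext, ?_⟩
  have hquarter := quarter_le_envelope (E.abar_nonneg n)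
    ((E.abar_le_two_thirds n).trans (by norm_num))
  linarith [(E.normalizedDminus_mem_Icc n).1]

end Invariant

end ANIE

theorem stmt12_general {α : ℝ} (E : ANIE α) {θ1 : ℝ} (hθ1 : θ1 = (√13 - 3) / 2) {j : ℕ} {σ : ℝ}
    (hσ : |σ| ≤ 1) (hblock : E.e (j + 1) * E.a (j + 1) ≠ 2) :
    (3 - E.abar j - σ * E.dminus j) / ((11 - √10) / 3 - E.abar j) ≥
      (3 - θ1 - θ1 / (1 - θ1)) / ((11 - √10) / 3 - θ1) := by
  have h10l : 3.16 ≤ √10 := Real.le_sqrt_of_sq_le (by norm_num)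
  have h10u : √10 ≤ 3.2 := Real.sqrt_le_iff.2 (by norm_num)
  have hd : σ * E.dminus j ≤ ANIE.envelope (E.abar j) :=
    calc σ * E.dminus j ≤ |σ| * |E.dminus j| := (le_abs_self _).trans_eq (abs_mul _ _)
      _ ≤ |E.dminus j| := mul_le_of_le_one_left (abs_nonneg _) hσ
      _ ≤ ANIE.envelope (E.abar j) := E.abs_dminus_le_envelope hblock
  rw [hθ1]
  exact ANIE.apex_ratio_le_of_le_envelope (by linarith) (by linarith)
    (by linarith [E.abar_le_two_thirds j]) hd

/-- Lemma 5: for an adjusted nearest integer expansion with `liminf a_i = 2`, if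
`ε_{i-2} a_{i-2} = -2` (here `i - 3 = j`, so `ε_{j+1} a_{j+1} = -2`) and `σ d_{i-3}^+ ≤ 0`,
then `(3 - ᾱ_{i-3} - σ d_{i-3}^-)/((11-√10)/3 - ᾱ_{i-3})` is at least its value at
`ᾱ_{i-3} = θ_1 = (√13-3)/2`. -/
theorem stmt12 (α : ℝ) (hirr : Irrational α) (h0 : 0 < α) (h12 : α < 1 / 2)
    (E : ANIE α) (hfreq : ∃ᶠ i in Filter.atTop, E.a i = 2)
    (θ1 : ℝ) (hθ1 : θ1 = (Real.sqrt 13 - 3) / 2)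
    (j : ℕ) (hj : 1 ≤ j) (σ : ℝ) (hσ : σ = 1 ∨ σ = -1)
    (hblock : E.e (j + 1) * E.a (j + 1) = -2)
    (hdp : σ * E.dplus j ≤ 0) :
    (3 - E.abar j - σ * E.dminus j) / ((11 - Real.sqrt 10) / 3 - E.abar j) ≥
      (3 - θ1 - θ1 / (1 - θ1)) / ((11 - Real.sqrt 10) / 3 - θ1) := by
  have hσ' : |σ| ≤ 1 := by rcases hσ with rfl | rfl <;> simp
  exact stmt12_general E hθ1 hσ' (by rw [hblock]; decide)
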